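/- (Lemma 4) Let p ↦ ≺_p be an assignment of a linear order on ℤ to every point p ∈ ℤ² whose generated nonnegative-slope digital segment system is a CDS. Then every two segments of the generated system are smooth if and only if for every pair of points p, p' ∈ ℤ² the orders ≺_p and ≺_{p'} are in agreement. -/

import Mathlib

open scoped Classical

/-- Points of the digital plane. -/
abbrev Pt : Type := ℤ × ℤ

/-- `q` lies in the closed first quadrant of `p`. -/
def Quad1 (p q : Pt) : Prop := p.1 ≤ q.1 ∧ p.2 ≤ q.2

/-- The number of elements `y` of the finite set `J` with `y ≺ x` or `y = x`. -/
noncomputable def rankLE (lt : ℤ → ℤ → Prop) (J : Finset ℤ) (x : ℤ) : ℤ :=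
  ((J.filter fun y => lt y x ∨ y = x).card : ℤ)

/-- `x` is among the `k` smallest elements of `J` with respect to the linear order `lt`. -/
def AmongSmallest (lt : ℤ → ℤ → Prop) (J : Finset ℤ) (k x : ℤ) : Prop :=
  x ∈ J ∧ rankLE lt J x ≤ k

/-- The interval `I(p,q) = [p.x+p.y, q.x+q.y-1]`. -/
noncomputable def Ival (p q : Pt) : Finset ℤ := Finset.Icc (p.1 + p.2) (q.1 + q.2 - 1)

/-- Membership in `H(lt,p,q)`: the `q.x - p.x` smallest elements of `I(p,q)` w.r.t. `lt`. -/
def Hmem (lt : ℤ → ℤ → Prop) (p q : Pt) (a : ℤ) : Prop :=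
  AmongSmallest lt (Ival p q) (q.1 - p.1) a

/-- The digital segment `R(lt,p,q)` for `q ∈ Q¹_p`, generated by the linear order `lt`. -/
noncomputable def seg (lt : ℤ → ℤ → Prop) (p q : Pt) : Set Pt :=
  {r : Pt | p.1 ≤ r.1 ∧ r.1 ≤ q.1 ∧ p.2 ≤ r.2 ∧ r.2 ≤ q.2 ∧
    p.1 + p.2 ≤ r.1 + r.2 ∧ r.1 + r.2 ≤ q.1 + q.2 ∧
    r.1 - p.1 =
      (((Finset.Icc (p.1 + p.2) (r.1 + r.2 - 1)).filter fun a => Hmem lt p q a).card : ℤ)}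

/-- `(t₁,t₂)` is a witness to the violation of (S3) for the pair of sets `(S,S')`. -/
def Witness (S S' : Set Pt) (t₁ t₂ : Pt) : Prop :=
  t₁ ∈ S ∧ t₁ ∈ S' ∧ t₂ ∈ S ∧ t₂ ∈ S' ∧
  t₁.1 + t₁.2 < t₂.1 + t₂.2 ∧
  ((t₁.1 + 1, t₁.2) : Pt) ∈ S ∧ ((t₁.1, t₁.2 + 1) : Pt) ∈ S' ∧
  ((t₂.1, t₂.2 - 1) : Pt) ∈ S ∧ ((t₂.1 - 1, t₂.2) : Pt) ∈ S'

/-- `a ≠ b` form a bad pair for `(lt,p)` and `(lt',p')`, where `p.x ≤ p'.x`. -/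
def BadPair (lt lt' : ℤ → ℤ → Prop) (p p' : Pt) (a b : ℤ) : Prop :=
  a ≠ b ∧ ∃ C ℓ : ℤ, p.1 + p.2 ≤ C ∧ p'.1 + p'.2 ≤ C ∧
    a ∈ Finset.Icc (p.1 + p.2) (C - 1) ∧ b ∈ Finset.Icc (p.1 + p.2) (C - 1) ∧
    a ∈ Finset.Icc (p'.1 + p'.2) (C - 1) ∧ b ∈ Finset.Icc (p'.1 + p'.2) (C - 1) ∧
    AmongSmallest lt (Finset.Icc (p.1 + p.2) (C - 1)) ℓ a ∧
    ¬ AmongSmallest lt (Finset.Icc (p.1 + p.2) (C - 1)) ℓ b ∧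
    AmongSmallest lt' (Finset.Icc (p'.1 + p'.2) (C - 1)) (ℓ - (p'.1 - p.1)) b ∧
    ¬ AmongSmallest lt' (Finset.Icc (p'.1 + p'.2) (C - 1)) (ℓ - (p'.1 - p.1)) a

/-- Bad pair for arbitrary `p, p'`: for `p.x > p'.x` the roles of `p` and `p'` are exchanged. -/
def BadPairSym (lt lt' : ℤ → ℤ → Prop) (p p' : Pt) (a b : ℤ) : Prop :=
  (p.1 ≤ p'.1 ∧ BadPair lt lt' p p' a b) ∨ (p'.1 ≤ p.1 ∧ BadPair lt' lt p' p a b)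

/-- Adjacency in the unit grid graph on `ℤ²`. -/
def GridAdj (u v : Pt) : Prop := |u.1 - v.1| + |u.2 - v.2| = 1

/-- `S` is the vertex set of a path from `p` to `q` in the unit grid graph. -/
def IsGridPath (S : Set Pt) (p q : Pt) : Prop :=
  ∃ (n : ℕ) (f : ℕ → Pt), f 0 = p ∧ f n = q ∧
    (∀ i, i < n → GridAdj (f i) (f (i + 1))) ∧
    (∀ i j, i ≤ n → j ≤ n → f i = f j → i = j) ∧
    S = {r : Pt | ∃ i, i ≤ n ∧ f i = r}

/-- The pair `p, q` has nonnegative slope. -/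
def NonnegPair (p q : Pt) : Prop := (p.1 ≤ q.1 ∧ p.2 ≤ q.2) ∨ (q.1 ≤ p.1 ∧ q.2 ≤ p.2)

/-- A nonnegative-slope digital segment system `R` is a CDS: properties (S1)-(S5). -/
def IsCDS (R : Pt → Pt → Set Pt) : Prop :=
  ∀ p q : Pt, NonnegPair p q →
    IsGridPath (R p q) p q ∧
    R p q = R q p ∧
    (∀ r s : Pt, r ∈ R p q → s ∈ R p q → NonnegPair r s → R r s ⊆ R p q) ∧
    (∃ r : Pt, r ∉ R p q ∧ NonnegPair p r ∧ R p q ⊆ R p r) ∧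
    (p.1 = q.1 → ∀ r ∈ R p q, r.1 = p.1) ∧
    (p.2 = q.2 → ∀ r ∈ R p q, r.2 = p.2)

/-- The nonnegative-slope digital segment system generated by an assignment of
linear orders to the points of `ℤ²`. -/
noncomputable def genR (ord : Pt → ℤ → ℤ → Prop) (p q : Pt) : Set Pt :=
  if p.1 ≤ q.1 ∧ p.2 ≤ q.2 then seg (ord p) p q else seg (ord q) q p

/-- The orders `lt` at `p` and `lt'` at `p'` are in agreement. -/
def Agree (p p' : Pt) (lt lt' : ℤ → ℤ → Prop) : Prop :=
  ∀ a b : ℤ, max p.1 p'.1 + max p.2 p'.2 ≤ a → max p.1 p'.1 + max p.2 p'.2 ≤ b →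
    (lt a b ↔ lt' a b)

/-- Two digital segments are smooth: the antidiagonal distance function is
monotonically nondecreasing or nonincreasing on its domain. -/
def SmoothPair (S S' : Set Pt) : Prop :=
  (∀ r₁ s₁ r₂ s₂ : Pt, r₁ ∈ S → s₁ ∈ S' → r₂ ∈ S → s₂ ∈ S' →
      r₁.1 + r₁.2 = s₁.1 + s₁.2 → r₂.1 + r₂.2 = s₂.1 + s₂.2 →
      r₁.1 + r₁.2 ≤ r₂.1 + r₂.2 → r₁.1 - s₁.1 ≤ r₂.1 - s₂.1) ∨
  (∀ r₁ s₁ r₂ s₂ : Pt, r₁ ∈ S → s₁ ∈ S' → r₂ ∈ S → s₂ ∈ S' →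
      r₁.1 + r₁.2 = s₁.1 + s₁.2 → r₂.1 + r₂.2 = s₂.1 + s₂.2 →
      r₁.1 + r₁.2 ≤ r₂.1 + r₂.2 → r₂.1 - s₂.1 ≤ r₁.1 - s₁.1)

/-- The waterline assignment of linear orders. -/
def waterOrd (p : Pt) : ℤ → ℤ → Prop := fun a b =>
  if 0 ≤ p.2 then a < b
  else (p.1 ≤ a ∧ p.1 ≤ b ∧ a < b) ∨ (p.1 ≤ a ∧ b < p.1) ∨ (a < p.1 ∧ b < p.1 ∧ b < a)

/-- `p₃` has a conflicting priority with respect to `(lt,p)` and `(lt',p')`. -/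
def ConflictPriority (lt lt' : ℤ → ℤ → Prop) (p p' p₃ : Pt) : Prop :=
  ∃ a b : ℤ, a ∈ Ival p p₃ ∧ a ∈ Ival p' p₃ ∧ b ∈ Ival p p₃ ∧ b ∈ Ival p' p₃ ∧
    Hmem lt p p₃ b ∧ ¬ Hmem lt p p₃ a ∧ Hmem lt' p' p₃ a ∧ ¬ Hmem lt' p' p₃ b

/-!
The point of `R(≺,p,q)` on the antidiagonal of coordinate sum `c` has `x`-coordinate
`p.x + #(H(≺,p,q) ∩ [p.x+p.y, c-1])`, because an initial segment of `k` elements really has `k`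
elements. Passing from `c` to `c + 1` therefore changes the distance of two segments by the
difference of the indicator functions of their sets `H`, so two segments are smooth iff one of
these sets contains the other on the common interval.

If the orders coincide on the common integers, the traces there of two initial segments are nested.
If `a ≺ b` but `b ≺' a`, initial segments separating `a` from `b` in both orders are not nested.
Hence smoothness for `p, p'` means agreement of the orders on all integers beyond both coordinate
sums. This exceeds agreement in the sense of `Agree` for the single pair, but for the whole
assignment it follows by comparing both orders with the one at the coordinatewise minimum.
-/

section Rank

variable {lt : ℤ → ℤ → Prop} {J : Finset ℤ} {a b k : ℤ}

lemma rankLE_nonneg : 0 ≤ rankLE lt J a :=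
  Int.natCast_nonneg _

lemma rankLE_le_card : rankLE lt J a ≤ J.card :=
  Int.ofNat_le.2 (Finset.card_filter_le _ _)

lemma rankLE_pos (ha : a ∈ J) : 0 < rankLE lt J a :=
  Int.natCast_pos.2 (Finset.card_pos.2 ⟨a, Finset.mem_filter.2 ⟨ha, Or.inr rfl⟩⟩)

lemma filter_lt_or_eq_subset_of_lt [IsTrans ℤ lt] (h : lt a b) :
    (J.filter fun y ↦ lt y a ∨ y = a) ⊆ J.filter fun y ↦ lt y b ∨ y = b := by
  refine Finset.monotone_filter_right J fun y _ hya ↦ Or.inl ?_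
  rcases hya with hya | rfl
  exacts [_root_.trans hya h, h]

lemma rankLE_le_rankLE [IsTrans ℤ lt] (h : lt a b) : rankLE lt J a ≤ rankLE lt J b :=
  Int.ofNat_le.2 (Finset.card_le_card (filter_lt_or_eq_subset_of_lt h))

lemma rankLE_lt_rankLE [IsStrictOrder ℤ lt] (hb : b ∈ J) (h : lt a b) :
    rankLE lt J a < rankLE lt J b := by
  have hba : ¬ (lt b a ∨ b = a) := by
    rintro (hba | rfl)
    exacts [asymm h hba, irrefl b h]
  refine Int.ofNat_lt.2 (Finset.card_lt_card ?_)
  rw [Finset.ssubset_iff_of_subset (filter_lt_or_eq_subset_of_lt h)]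
  exact ⟨b, Finset.mem_filter.2 ⟨hb, Or.inr rfl⟩, fun hmem ↦ hba (Finset.mem_filter.1 hmem).2⟩

lemma injOn_rankLE [IsStrictTotalOrder ℤ lt] : Set.InjOn (rankLE lt J) J := by
  intro a ha b hb hab
  rcases trichotomous_of lt a b with h | h | h
  · exact absurd hab (rankLE_lt_rankLE hb h).ne
  · exact h
  · exact absurd hab (rankLE_lt_rankLE ha h).ne'

lemma image_rankLE [IsStrictTotalOrder ℤ lt] :
    J.image (rankLE lt J) = Finset.Icc 1 (J.card : ℤ) := by
  refine Finset.eq_of_subset_of_card_le (Finset.image_subset_iff.2 fun a ha ↦ ?_) ?_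
  · exact Finset.mem_Icc.2 ⟨rankLE_pos ha, rankLE_le_card⟩
  · simp [Finset.card_image_of_injOn (injOn_rankLE (lt := lt))]

lemma card_filter_amongSmallest [IsStrictTotalOrder ℤ lt] (hk : 0 ≤ k) (hkJ : k ≤ J.card) :
    ((J.filter (AmongSmallest lt J k)).card : ℤ) = k := by
  have himage : (J.filter (AmongSmallest lt J k)).image (rankLE lt J) = Finset.Icc 1 k := by
    calc (J.filter (AmongSmallest lt J k)).image (rankLE lt J)
        = (J.image (rankLE lt J)).filter (· ≤ k) := by
          rw [Finset.filter_image]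
          congr 1
          exact Finset.filter_congr fun a ha ↦ and_iff_right ha
      _ = Finset.Icc 1 k := by
          ext i
          simp only [image_rankLE, Finset.mem_filter, Finset.mem_Icc]
          omega
  have hinj : Set.InjOn (rankLE lt J) (J.filter (AmongSmallest lt J k)) :=
    injOn_rankLE.mono (Finset.filter_subset _ J)
  rw [← Finset.card_image_of_injOn hinj, himage]
  simpa using hk

lemma AmongSmallest.of_lt [IsTrans ℤ lt] (hb : AmongSmallest lt J k b) (ha : a ∈ J) (h : lt a b) :
    AmongSmallest lt J k a :=
  ⟨ha, (rankLE_le_rankLE h).trans hb.2⟩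

lemma amongSmallest_rankLE_self (ha : a ∈ J) : AmongSmallest lt J (rankLE lt J a) a :=
  ⟨ha, le_rfl⟩

lemma not_amongSmallest_rankLE_of_lt [IsStrictOrder ℤ lt] (hb : b ∈ J) (h : lt a b) :
    ¬ AmongSmallest lt J (rankLE lt J a) b :=
  fun hab ↦ hab.2.not_gt (rankLE_lt_rankLE hb h)

end Rank

section Segment

variable {lt lt' : ℤ → ℤ → Prop} {p q p' q' : Pt}

lemma mem_ival {a : ℤ} : a ∈ Ival p q ↔ p.1 + p.2 ≤ a ∧ a < q.1 + q.2 := by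
  rw [Ival, Finset.mem_Icc, Int.le_sub_one_iff]

lemma card_filter_hmem [IsStrictTotalOrder ℤ lt] (hpq : Quad1 p q) :
    (((Ival p q).filter (Hmem lt p q)).card : ℤ) = q.1 - p.1 := by
  obtain ⟨h₁, h₂⟩ := hpq
  refine card_filter_amongSmallest (by omega) ?_
  rw [Ival, Int.card_Icc]
  omega

lemma exists_hmem_and_not_hmem [IsStrictOrder ℤ lt] {a b : ℤ} (ha : p.1 + p.2 ≤ a)
    (hb : p.1 + p.2 ≤ b) (h : lt a b) :
    ∃ q, Quad1 p q ∧ a ∈ Ival p q ∧ b ∈ Ival p q ∧ Hmem lt p q a ∧ ¬ Hmem lt p q b := by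
  set C := max a b + 1
  set J := Finset.Icc (p.1 + p.2) (C - 1) with hJ
  set k := rankLE lt J a
  have hk₀ : 0 ≤ k := rankLE_nonneg
  have hkJ : k ≤ J.card := rankLE_le_card
  rw [hJ, Int.card_Icc] at hkJ
  let q : Pt := (p.1 + k, C - (p.1 + k))
  have hIval : Ival p q = J := by simp only [Ival, q, hJ, add_sub_cancel]
  have haJ : a ∈ J := Finset.mem_Icc.2 ⟨ha, by omega⟩
  have hbJ : b ∈ J := Finset.mem_Icc.2 ⟨hb, by omega⟩
  have hk : q.1 - p.1 = k := add_sub_cancel_left _ _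
  refine ⟨q, ⟨le_add_of_nonneg_right hk₀, ?_⟩, hIval ▸ haJ, hIval ▸ hbJ, ?_⟩
  · change p.2 ≤ C - (p.1 + k)
    omega
  · rw [Hmem, Hmem, hIval, hk]
    exact ⟨amongSmallest_rankLE_self haJ, not_amongSmallest_rankLE_of_lt hbJ h⟩

/-- The `x`-coordinate of the point of `seg lt p q` whose coordinate sum is `c`. Defined for
every `c`, it is constant before the start and after the end of the segment. -/
noncomputable def segX (lt : ℤ → ℤ → Prop) (p q : Pt) (c : ℤ) : ℤ :=
  p.1 + ((Finset.Icc (p.1 + p.2) (c - 1)).filter (Hmem lt p q)).card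

lemma segX_start : segX lt p q (p.1 + p.2) = p.1 := by
  simp [segX]

lemma segX_end [IsStrictTotalOrder ℤ lt] (hpq : Quad1 p q) : segX lt p q (q.1 + q.2) = q.1 := by
  have h := card_filter_hmem (lt := lt) hpq
  rw [Ival] at h
  rw [segX, h, add_sub_cancel]

lemma segX_add_one (c : ℤ) :
    segX lt p q (c + 1) = segX lt p q c + if Hmem lt p q c then 1 else 0 := by
  by_cases hc : p.1 + p.2 ≤ c
  · have hnot : c ∉ (Finset.Icc (p.1 + p.2) (c - 1)).filter (Hmem lt p q) := by simp
    have hIcc := Finset.insert_Icc_sub_one_right_eq_Icc hc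
    rw [segX, segX, add_sub_cancel_right, ← hIcc, Finset.filter_insert]
    split_ifs
    · rw [Finset.card_insert_of_notMem hnot]
      push_cast
      ring
    · ring
  · have hH : ¬ Hmem lt p q c := fun h ↦ hc (mem_ival.1 h.1).1
    rw [segX, segX, if_neg hH, Finset.Icc_eq_empty (by omega), Finset.Icc_eq_empty (by omega)]
    simp

lemma monotone_segX : Monotone (segX lt p q) := by
  refine monotone_int_of_le_succ fun c ↦ ?_
  rw [segX_add_one]
  split_ifs <;> omega

lemma monotone_sub_segX : Monotone fun c ↦ c - segX lt p q c := by
  refine monotone_int_of_le_succ fun c ↦ ?_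
  rw [segX_add_one]
  split_ifs <;> omega

lemma mem_seg_iff [IsStrictTotalOrder ℤ lt] (hpq : Quad1 p q) {r : Pt} :
    r ∈ seg lt p q ↔
      r.1 + r.2 ∈ Set.Icc (p.1 + p.2) (q.1 + q.2) ∧ r.1 = segX lt p q (r.1 + r.2) := by
  constructor
  · rintro ⟨-, -, -, -, hp, hq, hr⟩
    exact ⟨⟨hp, hq⟩, eq_add_of_sub_eq' hr⟩
  · rintro ⟨⟨hp, hq⟩, hr⟩
    have hxp := monotone_segX (lt := lt) (p := p) (q := q) hp
    have hxq := monotone_segX (lt := lt) (p := p) (q := q) hq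
    have hyp := monotone_sub_segX (lt := lt) (p := p) (q := q) hp
    have hyq := monotone_sub_segX (lt := lt) (p := p) (q := q) hq
    simp only [segX_start, segX_end hpq, ← hr] at hxp hxq hyp hyq
    exact ⟨hxp, hxq, by omega, by omega, hp, hq, sub_eq_of_eq_add' hr⟩

lemma mk_segX_mem_seg [IsStrictTotalOrder ℤ lt] (hpq : Quad1 p q) {c : ℤ}
    (hc : c ∈ Set.Icc (p.1 + p.2) (q.1 + q.2)) :
    (segX lt p q c, c - segX lt p q c) ∈ seg lt p q := by
  rw [mem_seg_iff hpq, add_sub_cancel]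
  exact ⟨hc, rfl⟩

/-- The coordinate sums attained by both a segment from `p` to `q` and one from `p'` to `q'`. -/
def commonSums (p q p' q' : Pt) : Set ℤ :=
  Set.Icc (p.1 + p.2) (q.1 + q.2) ∩ Set.Icc (p'.1 + p'.2) (q'.1 + q'.2)

lemma forall_dist_seg_iff [IsStrictTotalOrder ℤ lt] [IsStrictTotalOrder ℤ lt'] (hpq : Quad1 p q)
    (hpq' : Quad1 p' q') (R : ℤ → ℤ → Prop) :
    (∀ r₁ s₁ r₂ s₂ : Pt, r₁ ∈ seg lt p q → s₁ ∈ seg lt' p' q' → r₂ ∈ seg lt p q →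
        s₂ ∈ seg lt' p' q' → r₁.1 + r₁.2 = s₁.1 + s₁.2 → r₂.1 + r₂.2 = s₂.1 + s₂.2 →
        r₁.1 + r₁.2 ≤ r₂.1 + r₂.2 → R (r₁.1 - s₁.1) (r₂.1 - s₂.1)) ↔
      ∀ c₁ ∈ commonSums p q p' q', ∀ c₂ ∈ commonSums p q p' q', c₁ ≤ c₂ →
        R (segX lt p q c₁ - segX lt' p' q' c₁) (segX lt p q c₂ - segX lt' p' q' c₂) := by
  constructor
  · intro h c₁ hc₁ c₂ hc₂ hle
    refine h _ _ _ _ (mk_segX_mem_seg hpq hc₁.1) (mk_segX_mem_seg hpq' hc₁.2)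
      (mk_segX_mem_seg hpq hc₂.1) (mk_segX_mem_seg hpq' hc₂.2) ?_ ?_ ?_
    · simp only [add_sub_cancel]
    · simp only [add_sub_cancel]
    · simpa only [add_sub_cancel] using hle
  · simp only [mem_seg_iff hpq, mem_seg_iff hpq']
    rintro h r₁ s₁ r₂ s₂ ⟨hr₁, er₁⟩ ⟨hs₁, es₁⟩ ⟨hr₂, er₂⟩ ⟨hs₂, es₂⟩ h₁ h₂ hle
    rw [← h₁] at hs₁ es₁
    rw [← h₂] at hs₂ es₂
    rw [er₁, es₁, er₂, es₂]
    exact h _ ⟨hr₁, hs₁⟩ _ ⟨hr₂, hs₂⟩ hle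

lemma smoothPair_seg_iff_monotoneOn_or_antitoneOn [IsStrictTotalOrder ℤ lt]
    [IsStrictTotalOrder ℤ lt'] (hpq : Quad1 p q) (hpq' : Quad1 p' q') :
    SmoothPair (seg lt p q) (seg lt' p' q') ↔
      MonotoneOn (fun c ↦ segX lt p q c - segX lt' p' q' c) (commonSums p q p' q') ∨
        AntitoneOn (fun c ↦ segX lt p q c - segX lt' p' q' c) (commonSums p q p' q') :=
  or_congr (forall_dist_seg_iff hpq hpq' (· ≤ ·)) (forall_dist_seg_iff hpq hpq' (· ≥ ·))

lemma mem_commonSums_and_add_one_mem_iff {a : ℤ} :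
    a ∈ commonSums p q p' q' ∧ a + 1 ∈ commonSums p q p' q' ↔ a ∈ Ival p q ∧ a ∈ Ival p' q' := by
  simp only [commonSums, Set.mem_inter_iff, Set.mem_Icc, mem_ival]
  omega

lemma monotoneOn_segX_sub_segX_iff :
    MonotoneOn (fun c ↦ segX lt p q c - segX lt' p' q' c) (commonSums p q p' q') ↔
      ∀ a ∈ Ival p q, a ∈ Ival p' q' → Hmem lt' p' q' a → Hmem lt p q a := by
  have hstep (a : ℤ) : segX lt p q a - segX lt' p' q' a ≤
      segX lt p q (a + 1) - segX lt' p' q' (a + 1) ↔ (Hmem lt' p' q' a → Hmem lt p q a) := by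
    rw [segX_add_one, segX_add_one]
    split_ifs <;> grind
  constructor
  · intro hmono a ha ha'
    obtain ⟨hc, hc'⟩ := mem_commonSums_and_add_one_mem_iff.2 ⟨ha, ha'⟩
    exact (hstep a).1 (hmono hc hc' (by omega))
  · intro hsub
    refine monotoneOn_of_le_add_one (Set.ordConnected_Icc.inter Set.ordConnected_Icc) ?_
    intro a _ hc hc'
    obtain ⟨ha, ha'⟩ := mem_commonSums_and_add_one_mem_iff.1 ⟨hc, hc'⟩
    exact (hstep a).2 (hsub a ha ha')

lemma antitoneOn_segX_sub_segX_iff :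
    AntitoneOn (fun c ↦ segX lt p q c - segX lt' p' q' c) (commonSums p q p' q') ↔
      ∀ a ∈ Ival p q, a ∈ Ival p' q' → Hmem lt p q a → Hmem lt' p' q' a := by
  have hswap : AntitoneOn (fun c ↦ segX lt p q c - segX lt' p' q' c) (commonSums p q p' q') ↔
      MonotoneOn (fun c ↦ segX lt' p' q' c - segX lt p q c) (commonSums p' q' p q) := by
    rw [commonSums, commonSums, Set.inter_comm]
    constructor <;> intro h <;> simpa only [neg_sub] using h.neg
  rw [hswap, monotoneOn_segX_sub_segX_iff]
  exact forall_congr' fun a ↦ forall_comm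

theorem smoothPair_seg_iff [IsStrictTotalOrder ℤ lt] [IsStrictTotalOrder ℤ lt']
    (hpq : Quad1 p q) (hpq' : Quad1 p' q') :
    SmoothPair (seg lt p q) (seg lt' p' q') ↔
      (∀ a ∈ Ival p q, a ∈ Ival p' q' → Hmem lt' p' q' a → Hmem lt p q a) ∨
        ∀ a ∈ Ival p q, a ∈ Ival p' q' → Hmem lt p q a → Hmem lt' p' q' a := by
  rw [smoothPair_seg_iff_monotoneOn_or_antitoneOn hpq hpq', monotoneOn_segX_sub_segX_iff,
    antitoneOn_segX_sub_segX_iff]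

end Segment

section Agreement

variable {lt lt' : ℤ → ℤ → Prop} {p q p' q' : Pt}

/-- The orders `lt` at `p` and `lt'` at `p'` coincide on every integer that can occur in intervals
`Ival p q` and `Ival p' q'` at once. The bound on the integers is the larger coordinate sum, which
is at most the bound `max p.1 p'.1 + max p.2 p'.2` in `Agree`. -/
def AgreeBeyondSums (p p' : Pt) (lt lt' : ℤ → ℤ → Prop) : Prop :=
  ∀ a b : ℤ, max (p.1 + p.2) (p'.1 + p'.2) ≤ a → max (p.1 + p.2) (p'.1 + p'.2) ≤ b →
    (lt a b ↔ lt' a b)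

lemma AgreeBeyondSums.agree (h : AgreeBeyondSums p p' lt lt') : Agree p p' lt lt' :=
  fun a b ha hb ↦ h a b (by omega) (by omega)

lemma Agree.agreeBeyondSums (h : Agree p p' lt lt') (hpp' : Quad1 p p') :
    AgreeBeyondSums p p' lt lt' := by
  obtain ⟨h₁, h₂⟩ := hpp'
  exact fun a b ha hb ↦ h a b (by omega) (by omega)

lemma forall_agree_iff_forall_agreeBeyondSums (ord : Pt → ℤ → ℤ → Prop) :
    (∀ p p', Agree p p' (ord p) (ord p')) ↔ ∀ p p', AgreeBeyondSums p p' (ord p) (ord p') := by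
  refine ⟨fun h p p' a b ha hb ↦ ?_, fun h p p' ↦ (h p p').agree⟩
  let m : Pt := (min p.1 p'.1, min p.2 p'.2)
  have hmp : Quad1 m p := ⟨min_le_left _ _, min_le_left _ _⟩
  have hmp' : Quad1 m p' := ⟨min_le_right _ _, min_le_right _ _⟩
  have hm : m.1 + m.2 ≤ p.1 + p.2 := add_le_add hmp.1 hmp.2
  have hm' : m.1 + m.2 ≤ p'.1 + p'.2 := add_le_add hmp'.1 hmp'.2
  calc ord p a b ↔ ord m a b :=
        ((h m p).agreeBeyondSums hmp a b (by omega) (by omega)).symm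
    _ ↔ ord p' a b := (h m p').agreeBeyondSums hmp' a b (by omega) (by omega)

lemma AgreeBeyondSums.hmem_nested [Std.Trichotomous lt] [IsTrans ℤ lt] [IsTrans ℤ lt']
    (h : AgreeBeyondSums p p' lt lt') :
    (∀ a ∈ Ival p q, a ∈ Ival p' q' → Hmem lt' p' q' a → Hmem lt p q a) ∨
      ∀ a ∈ Ival p q, a ∈ Ival p' q' → Hmem lt p q a → Hmem lt' p' q' a := by
  by_contra! hnot
  obtain ⟨⟨a, haI, haI', ha', ha⟩, b, hbI, hbI', hb, hb'⟩ := hnot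
  have hiff : lt b a ↔ lt' b a :=
    h b a (max_le (mem_ival.1 hbI).1 (mem_ival.1 hbI').1)
      (max_le (mem_ival.1 haI).1 (mem_ival.1 haI').1)
  rcases trichotomous_of lt a b with hab | rfl | hba
  · exact ha (hb.of_lt haI hab)
  · exact ha hb
  · exact hb' (ha'.of_lt hbI' (hiff.1 hba))

lemma rel_of_forall_smoothPair_seg [IsStrictTotalOrder ℤ lt] [IsStrictTotalOrder ℤ lt']
    (hsmooth : ∀ q q', Quad1 p q → Quad1 p' q' → SmoothPair (seg lt p q) (seg lt' p' q'))
    {a b : ℤ} (ha : max (p.1 + p.2) (p'.1 + p'.2) ≤ a) (hb : max (p.1 + p.2) (p'.1 + p'.2) ≤ b)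
    (hab : lt a b) : lt' a b := by
  obtain ⟨hap, hap'⟩ := max_le_iff.1 ha
  obtain ⟨hbp, hbp'⟩ := max_le_iff.1 hb
  rcases trichotomous_of lt' a b with hab' | rfl | hba'
  · exact hab'
  · exact absurd hab (irrefl a)
  · obtain ⟨q, hq, haI, hbI, haH, hbH⟩ := exists_hmem_and_not_hmem hap hbp hab
    obtain ⟨q', hq', hbI', haI', hbH', haH'⟩ := exists_hmem_and_not_hmem hbp' hap' hba'
    rcases (smoothPair_seg_iff hq hq').1 (hsmooth q q' hq hq') with hsub | hsub
    · exact absurd (hsub b hbI hbI' hbH') hbH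
    · exact absurd (hsub a haI haI' haH) haH'

theorem forall_smoothPair_seg_iff_agreeBeyondSums [IsStrictTotalOrder ℤ lt]
    [IsStrictTotalOrder ℤ lt'] :
    (∀ q q', Quad1 p q → Quad1 p' q' → SmoothPair (seg lt p q) (seg lt' p' q')) ↔
      AgreeBeyondSums p p' lt lt' := by
  refine ⟨fun h a b ha hb ↦ ⟨rel_of_forall_smoothPair_seg h ha hb, fun hab' ↦ ?_⟩,
    fun h q q' hq hq' ↦ (smoothPair_seg_iff hq hq').2 h.hmem_nested⟩
  rcases trichotomous_of lt a b with hab | rfl | hba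
  · exact hab
  · exact absurd hab' (irrefl a)
  · exact absurd (rel_of_forall_smoothPair_seg h hb ha hba) (asymm hab')

end Agreement

theorem statement10_general (ord : Pt → ℤ → ℤ → Prop)
    (hord : ∀ p : Pt, IsStrictTotalOrder ℤ (ord p)) :
    (∀ p q p' q' : Pt, Quad1 p q → Quad1 p' q' →
        SmoothPair (seg (ord p) p q) (seg (ord p') p' q')) ↔
      (∀ p p' : Pt, Agree p p' (ord p) (ord p')) := by
  rw [forall_agree_iff_forall_agreeBeyondSums]
  simp only [← forall_smoothPair_seg_iff_agreeBeyondSums]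
  exact forall_congr' fun p ↦ forall_comm

/-- Lemma 4: a CDS generated by an assignment of linear orders is a smooth
grid geometry (every two segments are smooth) iff all pairs of assigned orders are in
agreement. -/
theorem statement10 (ord : Pt → ℤ → ℤ → Prop)
    (hord : ∀ p : Pt, IsStrictTotalOrder ℤ (ord p))
    (hcds : IsCDS (genR ord)) :
    (∀ p q p' q' : Pt, Quad1 p q → Quad1 p' q' →
        SmoothPair (seg (ord p) p q) (seg (ord p') p' q')) ↔
      (∀ p p' : Pt, Agree p p' (ord p) (ord p')) :=
  statement10_general ord hord
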